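/- Let G=(V,E) be a finite weighted graph, k ≥ 1 an integer with k+1 ≤ |V|, and 0 < ε < 1. Let A_1,…,A_k be pairwise disjoint nonempty subsets of V with (1+ε)·φ(A_i) ≤ ρ(k+1) for every i. Then for each 1 ≤ i ≤ k there exists a nonempty set B_i ⊆ A_i such that: (1) φ(B_i) ≤ φ(A_i), and (2) for every nonempty S ⊊ B_i, e(S,B_i)·vol(B_i) ≥ (ε/3)·vol(B_i∖S)·e(S,V∖B_i). -/

import Mathlib

open Finset

/-- Weighted degree of a vertex. -/
noncomputable def deg {V : Type*} [Fintype V] (w : V → V → ℝ) (v : V) : ℝ :=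
  ∑ u, w v u

/-- Volume of a set of vertices. -/
noncomputable def vol {V : Type*} [Fintype V] (w : V → V → ℝ) (S : Finset V) : ℝ :=
  ∑ v ∈ S, deg w v

/-- Total weight of edges from `S` to `T \ S`. -/
noncomputable def eW {V : Type*} [DecidableEq V] (w : V → V → ℝ) (S T : Finset V) : ℝ :=
  ∑ u ∈ S, ∑ v ∈ T \ S, w u v

/-- Conductance of `S` in `G`. -/
noncomputable def phi {V : Type*} [Fintype V] [DecidableEq V] (w : V → V → ℝ)
    (S : Finset V) : ℝ :=
  eW w S Finset.univ / vol w S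

/-- Volume of `S ⊆ P` inside the induced subgraph `G[P]`. -/
noncomputable def volIn {V : Type*} [DecidableEq V] (w : V → V → ℝ) (P S : Finset V) : ℝ :=
  ∑ v ∈ S, ∑ u ∈ P, w v u

/-- `φ(G[P]) ≥ a` : every nonempty proper `S ⊊ P` with at most half of the induced volume
has induced conductance at least `a` (stated multiplicatively). -/
def inCondGE {V : Type*} [DecidableEq V] (w : V → V → ℝ) (P : Finset V) (a : ℝ) : Prop :=
  ∀ S : Finset V, S ⊆ P → S.Nonempty → S ≠ P →
    volIn w P S ≤ volIn w P P / 2 → a * volIn w P S ≤ eW w S P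

/-- `ρ(k)`: the minimum over families of `k` pairwise disjoint nonempty subsets of the
maximum conductance. -/
noncomputable def rho {V : Type*} [Fintype V] [DecidableEq V] (w : V → V → ℝ) (k : ℕ) : ℝ :=
  sInf { r | ∃ A : Fin k → Finset V, (∀ i, (A i).Nonempty) ∧
    (∀ i j, i ≠ j → Disjoint (A i) (A j)) ∧ r = ⨆ i, phi w (A i) }

/-- The normalized Laplacian `I - D^{-1/2} A D^{-1/2}`. -/
noncomputable def normLap {V : Type*} [Fintype V] [DecidableEq V] (w : V → V → ℝ) : Matrix V V ℝ :=
  1 - Matrix.of fun u v => w u v / (Real.sqrt (deg w u) * Real.sqrt (deg w v))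

/-- `lam w k` is the `k`-th smallest eigenvalue (1-indexed) of the normalized Laplacian. -/
noncomputable def lam {V : Type*} [Fintype V] [DecidableEq V] (w : V → V → ℝ) (k : ℕ) : ℝ :=
  if h : (normLap w).IsHermitian then
    ((Finset.univ.val.map h.eigenvalues).sort (· ≤ ·)).getD (k - 1) 0
  else 0


section Helpers
variable {V : Type*} [Fintype V] [DecidableEq V] {w : V → V → ℝ}

lemma eW_nonneg' (hnonneg : ∀ u v, 0 ≤ w u v) (S T : Finset V) : 0 ≤ eW w S T :=
  Finset.sum_nonneg fun _ _ => Finset.sum_nonneg fun _ _ => hnonneg _ _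

lemma vol_pos' (hdeg : ∀ v, 0 < deg w v) {S : Finset V} (h : S.Nonempty) : 0 < vol w S :=
  Finset.sum_pos (fun v _ => hdeg v) h

lemma phi_nonneg' (hnonneg : ∀ u v, 0 ≤ w u v) (hdeg : ∀ v, 0 < deg w v) (S : Finset V) :
    0 ≤ phi w S :=
  div_nonneg (eW_nonneg' hnonneg _ _) (Finset.sum_nonneg fun v _ => (hdeg v).le)

lemma eW_split {S B : Finset V} (h : S ⊆ B) :
    eW w S Finset.univ = eW w S B + eW w S (Finset.univ \ B) := by
  unfold eW
  rw [← Finset.sum_add_distrib]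
  refine Finset.sum_congr rfl fun u _ => ?_
  rw [← Finset.sum_union]
  · refine Finset.sum_congr ?_ fun _ _ => rfl
    ext x
    have := @h x
    simp only [mem_sdiff, mem_univ, mem_union, true_and]
    tauto
  · rw [Finset.disjoint_left]
    intro x
    simp only [mem_sdiff, mem_univ, true_and]
    tauto

lemma eW_symm' (hsym : ∀ u v, w u v = w v u) {S B : Finset V} (h : S ⊆ B) :
    eW w (B \ S) B = eW w S B := by
  unfold eW
  rw [Finset.sdiff_sdiff_eq_self h, Finset.sum_comm]
  exact Finset.sum_congr rfl fun u _ => Finset.sum_congr rfl fun v _ => hsym _ _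

lemma eW_bdry {S B : Finset V} (h : S ⊆ B) :
    eW w B Finset.univ = eW w S (Finset.univ \ B) + eW w (B \ S) (Finset.univ \ B) := by
  unfold eW
  rw [← Finset.sum_sdiff h, add_comm]
  congr 1
  · refine Finset.sum_congr rfl fun u _ => Finset.sum_congr ?_ fun _ _ => rfl
    ext x
    have := @h x
    simp only [mem_sdiff, mem_univ, true_and]
    tauto
  · refine Finset.sum_congr rfl fun u _ => Finset.sum_congr ?_ fun _ _ => rfl
    ext x
    simp only [mem_sdiff, mem_univ, true_and]
    tauto

lemma rho_le' (hnonneg : ∀ u v, 0 ≤ w u v) (hdeg : ∀ v, 0 < deg w v) {k : ℕ}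
    (A : Fin (k + 1) → Finset V) (hne : ∀ i, (A i).Nonempty)
    (hdisj : ∀ i j, i ≠ j → Disjoint (A i) (A j)) : ∃ i, rho w (k + 1) ≤ phi w (A i) := by
  obtain ⟨i, hi⟩ := exists_eq_ciSup_of_finite (f := fun i => phi w (A i))
  refine ⟨i, ?_⟩
  rw [hi]
  refine csInf_le ⟨0, ?_⟩ ⟨A, hne, hdisj, rfl⟩
  rintro r ⟨A', -, -, rfl⟩
  exact Real.iSup_nonneg fun i => phi_nonneg' hnonneg hdeg _

lemma rho_split (hnonneg : ∀ u v, 0 ≤ w u v) (hdeg : ∀ v, 0 < deg w v) {k : ℕ}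
    (A : Fin k → Finset V) (hne : ∀ i, (A i).Nonempty)
    (hdisj : ∀ i j, i ≠ j → Disjoint (A i) (A j)) (hlt : ∀ i, phi w (A i) < rho w (k + 1))
    (i : Fin k) {S T : Finset V} (hS : S ⊆ A i) (hT : T ⊆ A i) (hSn : S.Nonempty)
    (hTn : T.Nonempty) (hST : Disjoint S T) :
    rho w (k + 1) ≤ phi w S ∨ rho w (k + 1) ≤ phi w T := by
  have hSA : ∀ j, Disjoint S (Function.update A i T j) := by
    intro j
    by_cases hj : j = i
    · subst hj; simpa using hST
    · rw [Function.update_of_ne hj]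
      exact (hdisj i j (Ne.symm hj)).mono_left hS
  have hAA : ∀ j l, j ≠ l → Disjoint (Function.update A i T j) (Function.update A i T l) := by
    intro j l hjl
    by_cases hj : j = i
    · subst hj
      rw [Function.update_self, Function.update_of_ne hjl.symm]
      exact (hdisj _ _ hjl).mono_left hT
    · rw [Function.update_of_ne hj]
      by_cases hl : l = i
      · subst hl
        rw [Function.update_self]
        exact (hdisj _ _ hjl).mono_right hT
      · rw [Function.update_of_ne hl]
        exact hdisj _ _ hjl
  obtain ⟨j, hj⟩ := rho_le' hnonneg hdeg (k := k)
    (Fin.cons S (Function.update A i T) : Fin (k + 1) → Finset V)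
    (by
      intro j
      refine Fin.cases ?_ (fun j => ?_) j
      · simpa using hSn
      · rw [Fin.cons_succ]
        by_cases hj : j = i
        · subst hj; simpa using hTn
        · rw [Function.update_of_ne hj]; exact hne j)
    (by
      intro j l
      refine Fin.cases ?_ (fun j => ?_) j <;> refine Fin.cases ?_ (fun l => ?_) l
      · intro h; exact absurd rfl h
      · intro _; rw [Fin.cons_zero, Fin.cons_succ]; exact hSA l
      · intro _; rw [Fin.cons_zero, Fin.cons_succ]; exact (hSA j).symm
      · intro h; rw [Fin.cons_succ, Fin.cons_succ]
        exact hAA j l fun h' => h (by rw [h']))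
  revert hj
  refine Fin.cases ?_ (fun j => ?_) j
  · intro h; left; simpa using h
  · rw [Fin.cons_succ]
    by_cases hj : j = i
    · subst hj; intro h; right; simpa using h
    · rw [Function.update_of_ne hj]
      intro h
      exact absurd h (not_le.mpr (hlt j))

lemma arith' {a b c s t ε : ℝ} (ha : 0 ≤ a) (hb : 0 ≤ b) (hc : 0 ≤ c) (hs : 0 < s) (ht : 0 < t)
    (hε0 : 0 < ε) (hε1 : ε < 1)
    (h1 : (a + b) / (s + t) ≤ (c + a) / s) (h2 : (a + b) / (s + t) ≤ (c + b) / t)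
    (h : (1 + ε) * ((a + b) / (s + t)) ≤ (c + a) / s ∨
      (1 + ε) * ((a + b) / (s + t)) ≤ (c + b) / t) :
    ε / 3 * t * a ≤ c * (s + t) := by
  have hst : 0 < s + t := by positivity
  have hX : 0 ≤ c * (s + t) := by positivity
  have hεX : ε * (c * (s + t)) ≤ c * (s + t) := mul_le_of_le_one_left hX hε1.le
  have p1 : 0 ≤ ε * (a * s) := by positivity
  have p2 : 0 ≤ ε * (b * t) := by positivity
  have p3 : 0 ≤ ε * (a * t) := by positivity
  rw [div_le_div_iff₀ hst hs] at h1
  rw [div_le_div_iff₀ hst ht] at h2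
  rcases h with h | h
  · rw [← mul_div_assoc, div_le_div_iff₀ hst hs] at h
    have h3 := mul_le_mul_of_nonneg_left h2 hε0.le
    nlinarith
  · rw [← mul_div_assoc, div_le_div_iff₀ hst ht] at h
    nlinarith

end Helpers

theorem stmt5 {V : Type*} [Fintype V] [DecidableEq V] (w : V → V → ℝ)
    (hsym : ∀ u v, w u v = w v u) (hnonneg : ∀ u v, 0 ≤ w u v)
    (hdeg : ∀ v, 0 < deg w v) (k : ℕ) (hk : 1 ≤ k)
    (hcard : k + 1 ≤ Fintype.card V)
    (ε : ℝ) (hε0 : 0 < ε) (hε1 : ε < 1)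
    (A : Fin k → Finset V) (hne : ∀ i, (A i).Nonempty)
    (hdisj : ∀ i j, i ≠ j → Disjoint (A i) (A j))
    (hA : ∀ i, (1 + ε) * phi w (A i) ≤ rho w (k + 1)) :
    ∀ i, ∃ B : Finset V, B.Nonempty ∧ B ⊆ A i ∧
      phi w B ≤ phi w (A i) ∧
      ∀ S : Finset V, S ⊆ B → S.Nonempty → S ≠ B →
        ε / 3 * vol w (B \ S) * eW w S (Finset.univ \ B) ≤ eW w S B * vol w B := by
  intro i
  obtain ⟨B, hBm, hBmin⟩ := Finset.exists_min_image
    ((A i).powerset.filter fun B => B.Nonempty) (phi w) ⟨A i, by simp [hne i]⟩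
  simp only [Finset.mem_filter, Finset.mem_powerset] at hBm hBmin
  obtain ⟨hBA, hBn⟩ := hBm
  have hBle := hBmin (A i) ⟨subset_rfl, hne i⟩
  refine ⟨B, hBn, hBA, hBle, fun S hSB hSn hSne => ?_⟩
  have hTn : (B \ S).Nonempty := by
    rw [Finset.sdiff_nonempty]
    exact fun h => hSne (Finset.Subset.antisymm hSB h)
  have hTB : B \ S ⊆ B := Finset.sdiff_subset
  have h1 := hBmin S ⟨hSB.trans hBA, hSn⟩
  have h2 := hBmin (B \ S) ⟨hTB.trans hBA, hTn⟩
  have hvol : vol w B = vol w S + vol w (B \ S) := by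
    unfold vol; rw [add_comm, Finset.sum_sdiff hSB]
  have hcase : (1 + ε) * phi w B ≤ phi w S ∨ (1 + ε) * phi w B ≤ phi w (B \ S) := by
    have hBr : (1 + ε) * phi w B ≤ rho w (k + 1) :=
      (mul_le_mul_of_nonneg_left hBle (by linarith)).trans (hA i)
    rcases le_or_gt (rho w (k + 1)) 0 with hr | hr
    · left
      exact (hBr.trans hr).trans (phi_nonneg' hnonneg hdeg S)
    · have hlt : ∀ j, phi w (A j) < rho w (k + 1) := by
        intro j
        have := hA j
        rcases (phi_nonneg' hnonneg hdeg (A j)).eq_or_lt with h | h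
        · rw [← h]; exact hr
        · have := mul_pos hε0 h
          linarith
      exact (rho_split hnonneg hdeg A hne hdisj hlt i (hSB.trans hBA) (hTB.trans hBA) hSn hTn
        Finset.disjoint_sdiff).imp hBr.trans hBr.trans
  have eB : phi w B = (eW w S (Finset.univ \ B) + eW w (B \ S) (Finset.univ \ B)) /
      (vol w S + vol w (B \ S)) := by rw [phi, eW_bdry hSB, hvol]
  have eS : phi w S = (eW w S B + eW w S (Finset.univ \ B)) / vol w S := by
    rw [phi, eW_split hSB]
  have eT : phi w (B \ S) = (eW w S B + eW w (B \ S) (Finset.univ \ B)) / vol w (B \ S) := by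
    rw [phi, eW_split hTB, eW_symm' hsym hSB]
  rw [eB, eS] at h1
  rw [eB, eT] at h2
  rw [eB, eS, eT] at hcase
  rw [hvol]
  exact arith' (eW_nonneg' hnonneg _ _) (eW_nonneg' hnonneg _ _) (eW_nonneg' hnonneg _ _)
    (vol_pos' hdeg hSn) (vol_pos' hdeg hTn) hε0 hε1 h1 h2 hcase
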